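/- arXiv:1208.0441 — 2 statements merged into one kernel-verified Lean document; each statement's English description precedes it below -/
import Mathlib

section
/- Let h ∈ ℝ[x₁,…,xₙ] be a homogeneous polynomial hyperbolic with respect to e ∈ ℝⁿ and let ℓ be a linear form with ℓ(e) ≠ 0. Then for all sufficiently small ε > 0, the polynomial h̃(x) := h(x) + ε·ℓ(x)·(∂_e h)(x) is again hyperbolic with respect to e, and for every point a with h(a) = 0 and ℓ(a) ≠ 0, the multiplicity of h̃ at a is one less than the multiplicity of h at a. -/
open MvPolynomial

/-- The univariate polynomial `t ↦ h(a + t·v)` obtained by restricting a multivariate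
polynomial `h` to the line through `a` with direction `v`. -/
noncomputable def linePoly {n : ℕ} (h : MvPolynomial (Fin n) ℝ) (a v : Fin n → ℝ) :
    Polynomial ℝ :=
  MvPolynomial.aeval (fun i => Polynomial.C (a i) + Polynomial.C (v i) * Polynomial.X) h

/-- A real univariate polynomial has only real roots. -/
def RealRooted (q : Polynomial ℝ) : Prop :=
  ∀ z : ℂ, Polynomial.aeval z q = 0 → z.im = 0

/-- A real univariate polynomial has only non-negative real roots. -/
def NonnegRealRooted (q : Polynomial ℝ) : Prop :=
  ∀ z : ℂ, Polynomial.aeval z q = 0 → z.im = 0 ∧ 0 ≤ z.re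

/-- `h` is hyperbolic in direction `e`: `h(e) ≠ 0` and for all `a` the univariate
polynomial `t ↦ h(a - t·e)` has only real roots. -/
def IsHyperbolic {n : ℕ} (h : MvPolynomial (Fin n) ℝ) (e : Fin n → ℝ) : Prop :=
  MvPolynomial.eval e h ≠ 0 ∧ ∀ a : Fin n → ℝ, RealRooted (linePoly h a (-e))

/-- The hyperbolicity cone `Λ_e(h)`. -/
def hypCone {n : ℕ} (h : MvPolynomial (Fin n) ℝ) (e : Fin n → ℝ) : Set (Fin n → ℝ) :=
  {a | NonnegRealRooted (linePoly h a (-e))}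

/-- multiplicity (order of vanishing) of `h` at `a`: the smallest `m` such that the
degree-`m` homogeneous component of `h(x + a)` is non-zero. -/
noncomputable def multAt {n : ℕ} (h : MvPolynomial (Fin n) ℝ) (a : Fin n → ℝ) : ℕ :=
  sInf {m | MvPolynomial.homogeneousComponent m
    (MvPolynomial.aeval (fun i => MvPolynomial.X i + MvPolynomial.C (a i)) h) ≠ 0}

/-- `p` is a real-zero polynomial with respect to `e`. -/
def IsRealZero {n : ℕ} (p : MvPolynomial (Fin n) ℝ) (e : Fin n → ℝ) : Prop :=
  MvPolynomial.eval e p ≠ 0 ∧ ∀ v : Fin n → ℝ, RealRooted (linePoly p e v)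

/-- The rigidly convex set `S_e(p)` of a real-zero polynomial. -/
def rigidSet {n : ℕ} (p : MvPolynomial (Fin n) ℝ) (e : Fin n → ℝ) : Set (Fin n → ℝ) :=
  {a | ∀ t : ℝ, 0 ≤ t → t < 1 → ¬ (linePoly p e (a - e)).IsRoot t}

/-- A polynomial is strictly quasi-concave at `a` if its Hessian at `a` is negative
definite on the orthogonal complement of its gradient at `a`. -/
def StrictQuasiConcaveAt {n : ℕ} (g : MvPolynomial (Fin n) ℝ) (a : Fin n → ℝ) : Prop :=
  ∀ v : Fin n → ℝ, v ≠ 0 →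
    (∑ i, v i * MvPolynomial.eval a (MvPolynomial.pderiv i g)) = 0 →
    (∑ i, ∑ j, v i * v j *
      MvPolynomial.eval a (MvPolynomial.pderiv i (MvPolynomial.pderiv j g))) < 0

/-- A spectrahedral shadow (cone version): a linear image of
`{a : a₁M₁ + ⋯ + aₘMₘ ⪰ 0}` for real symmetric matrices `Mᵢ`. -/
def IsSpectrahedralShadowCone {n : ℕ} (S : Set (Fin n → ℝ)) : Prop :=
  ∃ (m d : ℕ) (M : Fin m → Matrix (Fin d) (Fin d) ℝ)
    (L : (Fin m → ℝ) →ₗ[ℝ] (Fin n → ℝ)),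
      (∀ i, (M i).IsSymm) ∧ S = L '' {a | (∑ i, a i • M i).PosSemidef}

/-- A spectrahedral shadow: a linear image of
`{b : M₀ + b₁M₁ + ⋯ + bₘMₘ ⪰ 0}` for real symmetric matrices `Mᵢ`. -/
def IsSpectrahedralShadow {n : ℕ} (S : Set (Fin n → ℝ)) : Prop :=
  ∃ (m d : ℕ) (M₀ : Matrix (Fin d) (Fin d) ℝ) (M : Fin m → Matrix (Fin d) (Fin d) ℝ)
    (L : (Fin m → ℝ) →ₗ[ℝ] (Fin n → ℝ)),
      M₀.IsSymm ∧ (∀ i, (M i).IsSymm) ∧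
      S = L '' {b | (M₀ + ∑ i, b i • M i).PosSemidef}

/-- A convex set is pointed if it contains no affine line. -/
def PointedSet {n : ℕ} (S : Set (Fin n → ℝ)) : Prop :=
  ¬ ∃ (a v : Fin n → ℝ), v ≠ 0 ∧ ∀ t : ℝ, a + t • v ∈ S

/-- Directional derivative `∂_e h = Σᵢ eᵢ ∂h/∂xᵢ`. -/
noncomputable def dirDeriv {n : ℕ} (e : Fin n → ℝ) (h : MvPolynomial (Fin n) ℝ) :
    MvPolynomial (Fin n) ℝ :=
  ∑ i, e i • MvPolynomial.pderiv i h

noncomputable def shiftP {n : ℕ} (a : Fin n → ℝ) :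
    MvPolynomial (Fin n) ℝ →ₐ[ℝ] MvPolynomial (Fin n) ℝ :=
  MvPolynomial.aeval (fun i => MvPolynomial.X i + MvPolynomial.C (a i))

lemma eval_linePoly {n : ℕ} (g : MvPolynomial (Fin n) ℝ) (a v : Fin n → ℝ) (s : ℝ) :
    (linePoly g a v).eval s = MvPolynomial.eval (a + s • v) g := by
  unfold linePoly
  induction g using MvPolynomial.induction_on with
  | C r => simp [MvPolynomial.algHom_C]
  | add p q hp hq => simp [hp, hq]
  | mul_X p i hp => simp [hp]; left; ring

lemma linePoly_add {n : ℕ} (g k : MvPolynomial (Fin n) ℝ) (a v : Fin n → ℝ) :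
    linePoly (g + k) a v = linePoly g a v + linePoly k a v := by simp [linePoly]

lemma linePoly_mul {n : ℕ} (g k : MvPolynomial (Fin n) ℝ) (a v : Fin n → ℝ) :
    linePoly (g * k) a v = linePoly g a v * linePoly k a v := by simp [linePoly]

lemma linePoly_smul {n : ℕ} (c : ℝ) (k : MvPolynomial (Fin n) ℝ) (a v : Fin n → ℝ) :
    linePoly (c • k) a v = c • linePoly k a v := by simp [linePoly]

lemma linePoly_linear {n : ℕ} (l : Fin n → ℝ) (a v : Fin n → ℝ) :
    linePoly (∑ i, MvPolynomial.C (l i) * MvPolynomial.X i) a v =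
      Polynomial.C (∑ i, l i * a i) + Polynomial.C (∑ i, l i * v i) * Polynomial.X := by
  simp only [linePoly, map_sum, map_mul, MvPolynomial.aeval_X, MvPolynomial.algHom_C,
    Polynomial.algebraMap_eq, Finset.sum_mul, ← Finset.sum_add_distrib]
  refine Finset.sum_congr rfl fun i _ => ?_
  ring

lemma dirDeriv_add {n : ℕ} (e : Fin n → ℝ) (p q : MvPolynomial (Fin n) ℝ) :
    dirDeriv e (p + q) = dirDeriv e p + dirDeriv e q := by
  simp [dirDeriv, Finset.sum_add_distrib]

lemma dirDeriv_neg_dir {n : ℕ} (e : Fin n → ℝ) (p : MvPolynomial (Fin n) ℝ) :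
    dirDeriv (-e) p = - dirDeriv e p := by
  simp [dirDeriv]

lemma dirDeriv_zero {n : ℕ} (e : Fin n → ℝ) :
    dirDeriv e (0 : MvPolynomial (Fin n) ℝ) = 0 := by
  simp [dirDeriv]

lemma dirDeriv_mul_X {n : ℕ} (e : Fin n → ℝ) (p : MvPolynomial (Fin n) ℝ) (i : Fin n) :
    dirDeriv e (p * X i) = dirDeriv e p * X i + C (e i) * p := by
  have : ∀ j, e j • pderiv j (p * X i) = (e j • pderiv j p) * X i + 
      (if j = i then C (e i) * p else 0) := by
    intro j
    rw [Derivation.leibniz, pderiv_X]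
    by_cases hj : j = i
    · subst hj
      simp [MvPolynomial.smul_eq_C_mul]; ring
    · simp [MvPolynomial.smul_eq_C_mul, hj, Ne.symm hj]; ring
  simp only [dirDeriv, this, Finset.sum_add_distrib, Finset.sum_mul]
  simp

lemma derivative_linePoly {n : ℕ} (g : MvPolynomial (Fin n) ℝ) (a v : Fin n → ℝ) :
    Polynomial.derivative (linePoly g a v) = linePoly (dirDeriv v g) a v := by
  induction g using MvPolynomial.induction_on with
  | C r => simp [linePoly, dirDeriv, MvPolynomial.algHom_C]
  | add p q hp hq => simp [dirDeriv_add, linePoly_add, hp, hq]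
  | mul_X p i hp =>
    rw [dirDeriv_mul_X, linePoly_add, linePoly_mul, linePoly_mul, linePoly_mul,
      Polynomial.derivative_mul, hp]
    simp [linePoly, MvPolynomial.algHom_C]; ring

lemma shiftP_dirDeriv {n : ℕ} (g : MvPolynomial (Fin n) ℝ) (a v : Fin n → ℝ) :
    shiftP a (dirDeriv v g) = dirDeriv v (shiftP a g) := by
  induction g using MvPolynomial.induction_on with
  | C r => simp [shiftP, dirDeriv, MvPolynomial.algHom_C, MvPolynomial.algebraMap_eq]
  | add p q hp hq => simp [dirDeriv_add, hp, hq]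
  | mul_X p i hp =>
    have h1 : shiftP a (X i) = X i + C (a i) := by simp [shiftP]
    have h2 : ∀ r, shiftP a (C r) = C r := by
      intro r; simp [shiftP, MvPolynomial.algHom_C, MvPolynomial.algebraMap_eq]
    have h3 : dirDeriv v (shiftP a p * C (a i)) = dirDeriv v (shiftP a p) * C (a i) := by
      simp only [dirDeriv, Finset.sum_mul]
      refine Finset.sum_congr rfl fun j _ => ?_
      rw [mul_comm, pderiv_C_mul]
      simp [MvPolynomial.smul_eq_C_mul]; ring
    rw [dirDeriv_mul_X, map_add, map_mul, map_mul, map_mul, h1, h2, hp,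
      mul_add (shiftP a p) (X i) (C (a i)), dirDeriv_add, dirDeriv_mul_X, h3]
    ring

lemma homComp_dirDeriv {n : ℕ} (k : ℕ) (p : MvPolynomial (Fin n) ℝ) (v : Fin n → ℝ) :
    homogeneousComponent k (dirDeriv v p) = dirDeriv v (homogeneousComponent (k+1) p) := by
  simp only [dirDeriv, map_sum, map_smul]
  refine Finset.sum_congr rfl fun i _ => ?_
  congr 1
  ext α
  simp [coeff_homogeneousComponent, coeff_pderiv, map_add]

lemma homComp_X_mul {n : ℕ} (k : ℕ) (p : MvPolynomial (Fin n) ℝ) (i : Fin n)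
    (hp : ∀ j < k, homogeneousComponent j p = 0) : homogeneousComponent k (X i * p) = 0 := by
  ext α
  rw [coeff_homogeneousComponent, coeff_X_mul']
  split_ifs with h1 h2
  · have hα : α = (α - Finsupp.single i 1) + Finsupp.single i 1 := by
      rw [tsub_add_cancel_of_le]
      simpa [Nat.one_le_iff_ne_zero] using h2
    have h3 : (α - Finsupp.single i 1).degree + 1 = k := by
      rw [← h1]; conv_rhs => rw [hα]
      simp [map_add]
    have := congrArg (coeff (α - Finsupp.single i 1)) (hp (α - Finsupp.single i 1).degree (by omega))
    simpa [coeff_homogeneousComponent] using this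
  · simp
  · simp

lemma coeff_linePoly {n : ℕ} (g : MvPolynomial (Fin n) ℝ) (a v : Fin n → ℝ) (k : ℕ) :
    (linePoly g a v).coeff k = eval v (homogeneousComponent k (shiftP a g)) := by
  have h1 : linePoly g a v = MvPolynomial.aeval
      (fun i => Polynomial.C (v i) * Polynomial.X) (shiftP a g) := by
    induction g using MvPolynomial.induction_on with
    | C r => simp [linePoly, shiftP, MvPolynomial.algHom_C]
    | add p q hp hq => simp [linePoly_add, hp, hq]
    | mul_X p i hp =>
      rw [linePoly_mul, hp, map_mul, map_mul]
      congr 1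
      simp [linePoly, shiftP, MvPolynomial.algHom_C]; ring
  rw [h1]
  generalize shiftP a g = p
  induction p using MvPolynomial.induction_on' with
  | monomial α c =>
    rw [homogeneousComponent_of_mem (isHomogeneous_monomial c rfl), aeval_monomial]
    have : (α.prod fun i k => (Polynomial.C (v i) * Polynomial.X) ^ k) = 
        Polynomial.C (α.prod fun i k => v i ^ k) * Polynomial.X ^ α.degree := by
      simp only [Finsupp.prod, mul_pow, Finset.prod_mul_distrib, Finset.prod_pow_eq_pow_sum,
        Finsupp.degree_apply, map_prod, map_pow]
    rw [this, Polynomial.algebraMap_eq, ← mul_assoc, ← Polynomial.C_mul,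
      Polynomial.coeff_C_mul_X_pow]
    split_ifs with h
    · rw [eval_monomial]
    · simp
  | add p q hp hq => simp [hp, hq]

lemma natDegree_linePoly {n d : ℕ} (h : MvPolynomial (Fin n) ℝ) (hhom : h.IsHomogeneous d)
    (a v : Fin n → ℝ) : (linePoly h a v).natDegree ≤ d := by
  unfold linePoly
  have := MvPolynomial.aeval_natDegree_le h hhom.totalDegree_le
    (fun i => Polynomial.C (a i) + Polynomial.C (v i) * Polynomial.X) (n := 1)
    (fun i => by compute_degree)
  simpa using this

lemma norm_sum_sq_le (s : Multiset ℂ) :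
    ‖s.sum‖^2 ≤ Multiset.card s * (s.map (fun u => ‖u‖^2)).sum := by
  induction s using Multiset.induction_on with
  | empty => simp
  | cons u s ih =>
    simp only [Multiset.sum_cons, Multiset.card_cons, Multiset.map_cons]
    push_cast
    rcases Multiset.empty_or_exists_mem s with rfl | ⟨w, hw⟩
    · simp
    have hc : (0:ℝ) < Multiset.card s := by
      exact_mod_cast Multiset.card_pos_iff_exists_mem.2 ⟨w, hw⟩
    set N : ℝ := (Multiset.card s : ℝ)
    set Q := (s.map (fun u => ‖u‖^2)).sum
    have h1 : ‖u + s.sum‖^2 ≤ (‖u‖ + ‖s.sum‖)^2 := by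
      gcongr; exact norm_add_le _ _
    have h2 : 2 * ‖u‖ * ‖s.sum‖ ≤ N * ‖u‖^2 + Q := by
      have : N * (2 * ‖u‖ * ‖s.sum‖) ≤ N * (N * ‖u‖^2 + Q) := by
        nlinarith [sq_nonneg (N * ‖u‖ - ‖s.sum‖)]
      exact le_of_mul_le_mul_left this hc
    nlinarith

/-- The key univariate statement. -/
lemma realRooted_perturb (q : Polynomial ℝ) (d : ℕ) (hd : q.natDegree ≤ d) (hq : RealRooted q)
    (c t₀ : ℝ) (hc : c ≠ 0) (hcd : |c| * d < 1) :
    RealRooted (q + Polynomial.C c * (Polynomial.X - Polynomial.C t₀) *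
      Polynomial.derivative q) := by
  intro z hz
  by_contra hy
  have hqz : Polynomial.aeval z q ≠ 0 := fun h => hy (hq z h)
  set Q := q.map (algebraMap ℝ ℂ) with hQ
  have hev : Q.eval z ≠ 0 := by rwa [hQ, Polynomial.eval_map_algebraMap]
  have hsum := (IsAlgClosed.splits Q).eval_derivative_div_eval_of_ne_zero hev
  have hw : z - t₀ ≠ 0 := fun h => hy (by simpa using congrArg Complex.im h)
  have hz' : Q.eval z + c * (z - t₀) * Q.derivative.eval z = 0 := by
    rw [hQ, Polynomial.derivative_map, Polynomial.eval_map_algebraMap,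
      Polynomial.eval_map_algebraMap]
    simpa using hz
  have hcC : (c : ℂ) ≠ 0 := by exact_mod_cast hc
  have hS : (Q.roots.map fun r => 1 / (z - r)).sum = -1 / (c * (z - t₀)) := by
    rw [← hsum]
    field_simp
    linear_combination hz'
  have hreal : ∀ r ∈ Q.roots, r.im = 0 := by
    intro r hr
    apply hq
    rw [Polynomial.mem_roots'] at hr
    rw [← Polynomial.eval_map_algebraMap]
    exact hr.2
  have hcard : Multiset.card Q.roots ≤ d :=
    (Polynomial.card_roots' Q).trans (Polynomial.natDegree_map_le.trans hd)
  -- imaginary parts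
  have him : ((Q.roots.map fun r => 1 / (z - r)).sum).im =
      - z.im * (Q.roots.map fun r => ‖1 / (z - r)‖^2).sum := by
    generalize Q.roots = s at hreal
    induction s using Multiset.induction_on with
    | empty => simp
    | cons r s ih =>
      have hr := hreal r (by simp)
      simp only [Multiset.map_cons, Multiset.sum_cons, Complex.add_im]
      rw [ih (fun r hr => hreal r (Multiset.mem_cons_of_mem hr))]
      have : (1 / (z - r)).im = - z.im * ‖1/(z-r)‖^2 := by
        rw [one_div, Complex.inv_im, norm_inv, inv_pow, ← Complex.normSq_eq_norm_sq]
        simp [hr]; ring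
      rw [this]; ring
  have hcs := norm_sum_sq_le (Q.roots.map fun r => 1 / (z - r))
  rw [Multiset.map_map, Multiset.card_map] at hcs
  simp only [Function.comp_def] at hcs
  rw [hS] at him hcs
  set P := (Q.roots.map fun r => ‖1 / (z - r)‖^2).sum
  set N := Complex.normSq (z - t₀) with hN
  have hNpos : 0 < N := Complex.normSq_pos.2 hw
  have e1 : (-1 / (c * (z - t₀))).im = z.im / (c * N) := by
    have : (-1 / (c * (z - t₀)) : ℂ) = ((-1/c : ℝ) : ℂ) * (z - t₀)⁻¹ := by
      push_cast; field_simp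
    rw [this, Complex.im_ofReal_mul, Complex.inv_im, ← hN]
    simp only [Complex.sub_im, Complex.ofReal_im, sub_zero]
    field_simp
  have e2 : ‖-1 / (c * (z - t₀))‖^2 = 1 / (c^2 * N) := by
    rw [norm_div, div_pow, norm_mul, mul_pow, hN, Complex.normSq_eq_norm_sq]
    simp
  rw [e1] at him
  rw [e2] at hcs
  have hP : P = - 1 / (c * N) := by
    have : z.im * P = z.im * (-1 / (c * N)) := by
      have : z.im * (-1 / (c * N)) = - (z.im / (c * N)) := by ring
      rw [this, him]; ring
    exact mul_left_cancel₀ hy this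
  have hP0 : 0 ≤ P := Multiset.sum_nonneg (by
    intro x hx
    obtain ⟨r, _, rfl⟩ := Multiset.mem_map.1 hx
    positivity)
  have hcs2 : 1 / (c^2 * N) ≤ d * P := hcs.trans (by gcongr)
  rw [hP] at hcs2
  have h5 : 1 ≤ - c * d := by
    have h6 := mul_le_mul_of_nonneg_left hcs2 (show 0 ≤ c^2 * N by positivity)
    have h7 : c^2 * N * (1 / (c^2 * N)) = 1 := by field_simp
    have h8 : c^2 * N * (d * (-1 / (c * N))) = - c * d := by field_simp
    linarith
  have h9 : -c * d ≤ |c| * d := by gcongr; exact neg_le_abs c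
  linarith

lemma laguerre_prod (s : Multiset ℝ) (hs : ∀ r ∈ s, r ≠ 0) (p : Polynomial ℝ)
    (hp : p = (s.map fun r => Polynomial.X - Polynomial.C r).prod) :
    (p.derivative.eval 0)^2 - p.eval 0 * p.derivative.derivative.eval 0 =
      (p.eval 0)^2 * (s.map fun r => (r⁻¹)^2).sum := by
  induction s using Multiset.induction_on generalizing p with
  | empty => simp [hp]
  | cons r s ih =>
    have hr : r ≠ 0 := hs r (by simp)
    have := ih (fun r hr => hs r (Multiset.mem_cons_of_mem hr)) _ rfl
    rw [Multiset.map_cons, Multiset.prod_cons] at hp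
    set p' := (s.map fun r => Polynomial.X - Polynomial.C r).prod
    subst hp
    simp only [Multiset.map_cons, Multiset.sum_cons, Polynomial.derivative_mul,
      Polynomial.derivative_add, Polynomial.derivative_sub, Polynomial.derivative_X,
      Polynomial.derivative_C, Polynomial.derivative_one, Polynomial.eval_add,
      Polynomial.eval_mul, Polynomial.eval_sub, Polynomial.eval_X, Polynomial.eval_C,
      Polynomial.eval_one, Polynomial.eval_zero, Polynomial.derivative_zero, sub_zero, zero_mul,
      zero_add, one_mul, zero_sub]
    have h2 : r^2 * (r⁻¹)^2 = 1 := by field_simp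
    linear_combination r^2 * this - (p'.eval 0)^2 * h2

lemma RealRooted.splits {q : Polynomial ℝ} (hq : RealRooted q) : q.Splits := by
  refine Polynomial.Splits.of_splits_map (algebraMap ℝ ℂ) (IsAlgClosed.splits _) ?_
  intro z hz
  rw [Polynomial.mem_roots'] at hz
  have : z.im = 0 := hq z (by rw [← Polynomial.eval_map_algebraMap]; exact hz.2)
  exact ⟨z.re, by apply Complex.ext <;> simp [this]⟩

lemma RealRooted.ne_zero {q : Polynomial ℝ} (hq : RealRooted q) : q ≠ 0 := by
  rintro rfl
  have := hq Complex.I (by simp)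
  simp at this

lemma laguerre {q : Polynomial ℝ} (hq : RealRooted q) (h0 : q.eval 0 ≠ 0) :
    (q.derivative.eval 0)^2 - q.eval 0 * q.derivative.derivative.eval 0 =
      (q.eval 0)^2 * (q.roots.map fun r => (r⁻¹)^2).sum := by
  have h1 := laguerre_prod q.roots (by
    rintro r hr rfl
    exact h0 (Polynomial.mem_roots'.1 hr).2) _ rfl
  have h2 := hq.splits.eq_prod_roots
  set p := (q.roots.map fun r => Polynomial.X - Polynomial.C r).prod
  generalize q.leadingCoeff = c at h2
  generalize (q.roots.map fun r => (r⁻¹)^2).sum = S at *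
  rw [h2]
  simp only [Polynomial.derivative_C_mul, Polynomial.eval_mul, Polynomial.eval_C]
  linear_combination c^2 * h1

lemma laguerre_nonneg {q : Polynomial ℝ} (hq : RealRooted q) :
    0 ≤ (q.derivative.eval 0)^2 - q.eval 0 * q.derivative.derivative.eval 0 := by
  by_cases h0 : q.eval 0 = 0
  · rw [h0]; nlinarith [sq_nonneg (q.derivative.eval 0)]
  · rw [laguerre hq h0]
    refine mul_nonneg (sq_nonneg _) (Multiset.sum_nonneg ?_)
    intro x hx
    obtain ⟨r, _, rfl⟩ := Multiset.mem_map.1 hx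
    positivity

lemma growth_bound {q : Polynomial ℝ} (hq : RealRooted q) (h0 : q.eval 0 ≠ 0) {d : ℕ}
    (hd : q.natDegree ≤ d) {M : ℝ} (hM : 0 ≤ M)
    (hb : (q.derivative.eval 0)^2 - q.eval 0 * q.derivative.derivative.eval 0 ≤
      M^2 * (q.eval 0)^2) (t : ℝ) :
    |q.eval t| ≤ (1 + |t| * M)^d * |q.eval 0| := by
  rw [laguerre hq h0] at hb
  have hq0 : 0 < (q.eval 0)^2 := by positivity
  have hS : (q.roots.map fun r => (r⁻¹)^2).sum ≤ M^2 := by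
    rw [mul_comm] at hb
    exact le_of_mul_le_mul_right hb hq0
  have hr : ∀ r ∈ q.roots, |t - r| ≤ (1 + |t| * M) * |r| := by
    intro r hr
    have hr0 : r ≠ 0 := by
      rintro rfl
      exact h0 (Polynomial.mem_roots'.1 hr).2
    have h1 : (r⁻¹)^2 ≤ M^2 := by
      refine le_trans ?_ hS
      refine Multiset.single_le_sum ?_ _ (Multiset.mem_map_of_mem _ hr)
      intro x hx
      obtain ⟨r, _, rfl⟩ := Multiset.mem_map.1 hx
      positivity
    have h2 : |r⁻¹| ≤ M := abs_le_of_sq_le_sq h1 hM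
    have h3 : 1 ≤ M * |r| := by
      have := mul_le_mul_of_nonneg_right h2 (abs_nonneg r)
      rwa [← abs_mul, inv_mul_cancel₀ hr0, abs_one] at this
    have h4 : |t - r| ≤ |t| + |r| := abs_sub _ _
    nlinarith [abs_nonneg t]
  have hcard : Multiset.card q.roots ≤ d := (Polynomial.card_roots' q).trans hd
  have key : ∀ s : Multiset ℝ, (∀ r ∈ s, |t - r| ≤ (1 + |t| * M) * |r|) →
      |(s.map (fun r => t - r)).prod| ≤ (1 + |t| * M)^(Multiset.card s) *
        |(s.map (fun r => 0 - r)).prod| := by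
    intro s
    induction s using Multiset.induction_on with
    | empty => simp
    | cons r s ih =>
      intro h
      have h1 := h r (by simp)
      have h2 := ih (fun r hr => h r (Multiset.mem_cons_of_mem hr))
      simp only [Multiset.map_cons, Multiset.prod_cons, abs_mul, Multiset.card_cons, zero_sub,
        abs_neg] at *
      calc _ ≤ ((1 + |t| * M) * |r|) * ((1 + |t| * M) ^ (Multiset.card s) *
            |(s.map (fun x => -x)).prod|) := by gcongr
        _ = _ := by ring
  rw [hq.splits.eval_eq_prod_roots t, hq.splits.eval_eq_prod_roots 0, abs_mul, abs_mul]
  have h5 : (1 + |t| * M)^(Multiset.card q.roots) ≤ (1 + |t| * M)^d :=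
    pow_le_pow_right₀ (by nlinarith [mul_nonneg (abs_nonneg t) hM]) hcard
  calc _ ≤ |q.leadingCoeff| * ((1 + |t| * M)^(Multiset.card q.roots) *
        |(q.roots.map (fun r => 0 - r)).prod|) := by
        gcongr; exact key _ hr
    _ ≤ |q.leadingCoeff| * ((1 + |t| * M)^d *
        |(q.roots.map (fun r => 0 - r)).prod|) := by gcongr
    _ = _ := by ring

open Filter Topology in
lemma dirDeriv_lowest_ne_zero {n d : ℕ} (h : MvPolynomial (Fin n) ℝ) (e a : Fin n → ℝ)
    (hhom : h.IsHomogeneous d) (hhyp : ∀ a, RealRooted (linePoly h a e)) (k : ℕ)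
    (hlow : ∀ j < k + 1, homogeneousComponent j (shiftP a h) = 0)
    (hm : homogeneousComponent (k + 1) (shiftP a h) ≠ 0) :
    dirDeriv e (homogeneousComponent (k + 1) (shiftP a h)) ≠ 0 := by
  intro hD
  obtain ⟨v, hv⟩ : ∃ v, eval v (homogeneousComponent (k + 1) (shiftP a h)) ≠ 0 := by
    by_contra! hcon
    exact hm (MvPolynomial.funext (fun v => by simpa using hcon v))
  have hlow' : ∀ j < k + 2, dirDeriv e (homogeneousComponent j (shiftP a h)) = 0 := by
    intro j hj
    rcases Nat.lt_succ_iff_lt_or_eq.1 hj with hj | rfl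
    · rw [hlow j hj, dirDeriv_zero]
    · exact hD
  obtain ⟨U, hU⟩ : Polynomial.X^(k+1) ∣ linePoly h a v := by
    rw [Polynomial.X_pow_dvd_iff]
    intro j hj
    rw [coeff_linePoly, hlow j hj, map_zero]
  obtain ⟨W, hW⟩ : Polynomial.X^(k+1) ∣ linePoly (dirDeriv e h) a v := by
    rw [Polynomial.X_pow_dvd_iff]
    intro j hj
    rw [coeff_linePoly, shiftP_dirDeriv, homComp_dirDeriv, hlow' _ (by omega), map_zero]
  obtain ⟨Y, hY⟩ : Polynomial.X^k ∣ linePoly (dirDeriv e (dirDeriv e h)) a v := by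
    rw [Polynomial.X_pow_dvd_iff]
    intro j hj
    rw [coeff_linePoly, shiftP_dirDeriv, shiftP_dirDeriv, homComp_dirDeriv, homComp_dirDeriv,
      hlow' _ (by omega), dirDeriv_zero, map_zero]
  have hU0 : U.eval 0 ≠ 0 := by
    rw [← coeff_linePoly, hU] at hv
    rw [← Polynomial.coeff_zero_eq_eval_zero]
    simpa [Polynomial.coeff_X_pow_mul'] using hv
  -- values of the one-parameter family at `t = 0`
  have q0 : ∀ s : ℝ, (linePoly h (a + s • v) e).eval 0 = s^(k+1) * U.eval s := by
    intro s
    rw [eval_linePoly, zero_smul, add_zero, ← eval_linePoly, hU]; simp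
  have q1 : ∀ s : ℝ, (linePoly h (a + s • v) e).derivative.eval 0 = s^(k+1) * W.eval s := by
    intro s
    rw [derivative_linePoly, eval_linePoly, zero_smul, add_zero, ← eval_linePoly, hW]; simp
  have q2 : ∀ s : ℝ, (linePoly h (a + s • v) e).derivative.derivative.eval 0 =
      s^k * Y.eval s := by
    intro s
    rw [derivative_linePoly, derivative_linePoly, eval_linePoly, zero_smul, add_zero,
      ← eval_linePoly, hY]; simp
  have hpos : ∀ s : ℝ, s ≠ 0 → 0 ≤ s * (s * (W.eval s)^2 - U.eval s * Y.eval s) := by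
    intro s hs
    have h1 := laguerre_nonneg (hhyp (a + s • v))
    rw [q0, q1, q2] at h1
    have h2 : (s^(k+1) * W.eval s)^2 - s^(k+1) * U.eval s * (s^k * Y.eval s) =
        (s^k)^2 * (s * (s * (W.eval s)^2 - U.eval s * Y.eval s)) := by ring
    rw [h2] at h1
    exact nonneg_of_mul_nonneg_right h1 (by positivity)
  have hcont : Continuous (fun s : ℝ => s * (W.eval s)^2 - U.eval s * Y.eval s) := by fun_prop
  have hY0 : Y.eval 0 = 0 := by
    have hge : 0 ≤ (0:ℝ) * (W.eval 0)^2 - U.eval 0 * Y.eval 0 := by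
      refine ge_of_tendsto (hcont.continuousAt.tendsto.mono_left
        (nhdsWithin_le_nhds (s := Set.Ioi 0))) ?_
      filter_upwards [self_mem_nhdsWithin] with s hs
      have hs : 0 < s := hs
      exact nonneg_of_mul_nonneg_right (hpos s hs.ne') hs
    have hle : (0:ℝ) * (W.eval 0)^2 - U.eval 0 * Y.eval 0 ≤ 0 := by
      refine le_of_tendsto (hcont.continuousAt.tendsto.mono_left
        (nhdsWithin_le_nhds (s := Set.Iio 0))) ?_
      filter_upwards [self_mem_nhdsWithin] with s hs
      have hs : s < 0 := hs
      have := hpos s hs.ne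
      by_contra! hc
      nlinarith
    have : U.eval 0 * Y.eval 0 = 0 := by linarith
    exact (mul_eq_zero.1 this).resolve_left hU0
  obtain ⟨Z, hZ⟩ : Polynomial.X ∣ Y := by
    rw [Polynomial.X_dvd_iff, Polynomial.coeff_zero_eq_eval_zero, hY0]
  set ψ : ℝ → ℝ := fun s => ((W.eval s)^2 - U.eval s * Z.eval s) / (U.eval s)^2 with hψ
  have hψc : ContinuousAt ψ 0 := by
    refine ContinuousAt.div (by fun_prop) (by fun_prop) (by positivity)
  set M := |ψ 0| + 1 with hM
  have hM0 : 0 ≤ M := by positivity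
  have hMψ : ψ 0 < M^2 := by nlinarith [le_abs_self (ψ 0), abs_nonneg (ψ 0)]
  have ev1 : ∀ᶠ s in 𝓝 (0:ℝ), ψ s < M^2 := hψc.eventually_lt_const hMψ
  have ev2 : ∀ᶠ s in 𝓝 (0:ℝ), U.eval s ≠ 0 := by
    have : ContinuousAt (fun s => U.eval s) 0 := by fun_prop
    exact this.eventually_ne hU0
  have hzero : ∀ t : ℝ, (linePoly h a e).eval t = 0 := by
    intro t
    have ev : ∀ᶠ s in 𝓝[≠] (0:ℝ), |(linePoly h (a + t • e) v).eval s| ≤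
        (1 + |t| * M)^d * |s^(k+1) * U.eval s| := by
      filter_upwards [self_mem_nhdsWithin, nhdsWithin_le_nhds ev1, nhdsWithin_le_nhds ev2]
        with s hs h1 h2
      have hs : s ≠ 0 := hs
      have h3 : (linePoly h (a + t • e) v).eval s = (linePoly h (a + s • v) e).eval t := by
        rw [eval_linePoly, eval_linePoly, add_right_comm]
      rw [h3, ← q0]
      refine growth_bound (hhyp _) ?_ (natDegree_linePoly h hhom _ _) hM0 ?_ t
      · rw [q0]; positivity
      · rw [q0, q1, q2, hZ]
        rw [hψ] at h1
        simp only at h1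
        rw [div_lt_iff₀ (by positivity)] at h1
        have h4 := mul_le_mul_of_nonneg_left h1.le (sq_nonneg (s^(k+1)))
        simp only [Polynomial.eval_mul, Polynomial.eval_X]
        calc _ = (s^(k+1))^2 * ((W.eval s)^2 - U.eval s * Z.eval s) := by ring
          _ ≤ _ := h4
          _ = _ := by ring
    have c1 : Continuous (fun s : ℝ => |(linePoly h (a + t • e) v).eval s|) := by fun_prop
    have c2 : Continuous (fun s : ℝ => (1 + |t| * M)^d * |s^(k+1) * U.eval s|) := by fun_prop
    have := le_of_tendsto_of_tendsto (c1.continuousAt.tendsto.mono_left nhdsWithin_le_nhds)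
      (c2.continuousAt.tendsto.mono_left nhdsWithin_le_nhds) ev
    simp only [eval_linePoly, zero_smul, add_zero] at this ⊢
    simpa using this
  refine (hhyp a).ne_zero (Polynomial.funext fun t => ?_)
  rw [hzero t, Polynomial.eval_zero]

/-- **Nuij's perturbation.** If `h` is homogeneous hyperbolic with respect
to `e` and `ℓ` is a linear form with `ℓ(e) ≠ 0`, then for all sufficiently small `ε > 0`
the polynomial `h̃ = h + ε·ℓ·∂_e h` is hyperbolic with respect to `e`, and at every point
`a` with `h(a) = 0` and `ℓ(a) ≠ 0` the multiplicity of `h̃` is one less than that of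
`h`. -/
theorem nuij_perturbation
    {n d : ℕ} (h : MvPolynomial (Fin n) ℝ) (e : Fin n → ℝ)
    (hhom : h.IsHomogeneous d) (hhyp : IsHyperbolic h e)
    (l : Fin n → ℝ) (hle : ∑ i, l i * e i ≠ 0) :
    ∃ ε₀ > (0 : ℝ), ∀ ε : ℝ, 0 < ε → ε ≤ ε₀ →
      IsHyperbolic
        (h + ε • ((∑ i, MvPolynomial.C (l i) * MvPolynomial.X i) * dirDeriv e h)) e ∧
      ∀ a : Fin n → ℝ, MvPolynomial.eval a h = 0 → (∑ i, l i * a i) ≠ 0 →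
        multAt (h + ε • ((∑ i, MvPolynomial.C (l i) * MvPolynomial.X i) * dirDeriv e h)) a
          = multAt h a - 1 := by
  classical
  set L := ∑ i, l i * e i with hL
  have hLpos : 0 < |L| := abs_pos.2 hle
  refine ⟨1 / (|L| * (d + 1)), by positivity, fun ε hε hε' => ?_⟩
  have hcd : |ε * L| * d < 1 := by
    rw [abs_mul, abs_of_pos hε]
    have h1 : ε * (|L| * (d + 1)) ≤ 1 := by
      rwa [le_div_iff₀ (by positivity)] at hε'
    have h2 : 0 < ε * |L| := by positivity
    nlinarith
  have hc : ε * L ≠ 0 := mul_ne_zero hε.ne' hle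
  refine ⟨⟨?_, fun a => ?_⟩, fun a ha hla => ?_⟩
  · have hE : eval e (dirDeriv e h) = d * eval e h := by
      have := congrArg (eval e) hhom.sum_X_mul_pderiv
      simpa [dirDeriv, MvPolynomial.smul_eval] using this
    have : eval e (h + ε • ((∑ i, MvPolynomial.C (l i) * MvPolynomial.X i) * dirDeriv e h)) =
        eval e h * (1 + ε * L * d) := by
      simp only [map_add, MvPolynomial.smul_eval, map_mul, map_sum, eval_C, eval_X, hE]
      rw [← hL]; ring
    rw [this]
    refine mul_ne_zero hhyp.1 ?_
    have h1 : -(ε * L) * d ≤ |ε * L| * d := by gcongr; exact neg_le_abs _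
    intro h0
    linarith
  · have h1 := realRooted_perturb (linePoly h a (-e)) d (natDegree_linePoly h hhom _ _)
      (hhyp.2 a) (ε * L) ((∑ i, l i * a i) / L) hc hcd
    convert h1 using 1
    rw [linePoly_add, linePoly_smul, linePoly_mul, linePoly_linear, derivative_linePoly,
      dirDeriv_neg_dir]
    have h2 : linePoly (-dirDeriv e h) a (-e) = - linePoly (dirDeriv e h) a (-e) := by
      simp [linePoly]
    have h3 : ∑ i, l i * (-e) i = - L := by simp [hL]
    have h4 : Polynomial.C (∑ i, l i * a i) =
        Polynomial.C L * Polynomial.C ((∑ i, l i * a i) / L) := by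
      rw [← Polynomial.C_mul, mul_div_cancel₀ _ hle]
    rw [h2, h3, h4, Polynomial.smul_eq_C_mul]
    simp only [map_mul, map_neg]
    ring
  · have hh0 : h ≠ 0 := by
      rintro rfl
      exact hhyp.1 (by simp)
    obtain ⟨b, hb⟩ : ∃ b, eval b h ≠ 0 := ⟨e, hhyp.1⟩
    set H := shiftP a h with hH
    have hHne : H ≠ 0 := by
      intro h0
      apply hb
      have h1 := eval_linePoly h a (b - a) 1
      have h2 : linePoly h a (b - a) = 0 := by
        ext k
        rw [coeff_linePoly, ← hH, h0]; simp
      rw [h2] at h1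
      simpa using h1.symm
    have hne : {m | homogeneousComponent m H ≠ 0}.Nonempty := by
      by_contra hcon
      rw [Set.not_nonempty_iff_eq_empty] at hcon
      apply hHne
      rw [← sum_homogeneousComponent H]
      refine Finset.sum_eq_zero fun i _ => ?_
      by_contra h1
      have : i ∈ {m | homogeneousComponent m H ≠ 0} := h1
      rw [hcon] at this
      exact this
    have hmdef : multAt h a = sInf {m | homogeneousComponent m H ≠ 0} := rfl
    have hmem : homogeneousComponent (multAt h a) H ≠ 0 := Nat.sInf_mem hne
    have hlow : ∀ j < multAt h a, homogeneousComponent j H = 0 := by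
      intro j hj
      by_contra h1
      exact Nat.notMem_of_lt_sInf hj h1
    have hm0 : multAt h a ≠ 0 := by
      intro h0
      rw [h0] at hmem
      apply hmem
      have h1 := coeff_linePoly h a 0 0
      rw [Polynomial.coeff_zero_eq_eval_zero, eval_linePoly, ← hH,
        homogeneousComponent_zero, eval_C] at h1
      rw [homogeneousComponent_zero, ← h1]
      simp [ha]
    obtain ⟨k, hk⟩ := Nat.exists_eq_succ_of_ne_zero hm0
    rw [hk] at hmem hlow ⊢
    have hDne : dirDeriv e (homogeneousComponent (k+1) H) ≠ 0 := by
      have := dirDeriv_lowest_ne_zero h (-e) a hhom hhyp.2 k hlow hmem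
      rwa [dirDeriv_neg_dir, neg_ne_zero] at this
    have hDlow : ∀ j < k, homogeneousComponent j (dirDeriv e H) = 0 := by
      intro j hj
      rw [homComp_dirDeriv, hlow _ (by omega), dirDeriv_zero]
    have hshift : shiftP a
        (h + ε • ((∑ i, MvPolynomial.C (l i) * MvPolynomial.X i) * dirDeriv e h)) =
        H + ε • (∑ i, C (l i) * (X i * dirDeriv e H) +
          C (∑ i, l i * a i) * dirDeriv e H) := by
      have h1 : shiftP a (∑ i, MvPolynomial.C (l i) * MvPolynomial.X i) =
          ∑ i, C (l i) * X i + C (∑ i, l i * a i) := by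
        simp only [shiftP, map_sum, map_mul, aeval_X, algHom_C, MvPolynomial.algebraMap_eq,
          mul_add, Finset.sum_add_distrib]
      rw [map_add, map_smul, map_mul, shiftP_dirDeriv, h1, add_mul, Finset.sum_mul]
      simp only [mul_assoc, hH]
    have hcomp : ∀ j ≤ k, homogeneousComponent j (shiftP a
        (h + ε • ((∑ i, MvPolynomial.C (l i) * MvPolynomial.X i) * dirDeriv e h))) =
        (ε * ∑ i, l i * a i) • dirDeriv e (homogeneousComponent (j+1) H) := by
      intro j hj
      rw [hshift, map_add, hlow j (by omega), map_smul, map_add, map_sum,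
        homogeneousComponent_C_mul, homComp_dirDeriv]
      rw [Finset.sum_eq_zero]
      · simp only [zero_add, MvPolynomial.smul_eq_C_mul, map_mul]; ring
      · intro i _
        rw [homogeneousComponent_C_mul, homComp_X_mul _ _ _ (fun i hi => hDlow i (by omega)),
          mul_zero]
    refine IsLeast.csInf_eq ⟨?_, ?_⟩
    · change homogeneousComponent k (shiftP a _) ≠ 0
      rw [hcomp k le_rfl]
      exact smul_ne_zero (mul_ne_zero hε.ne' hla) hDne
    · intro j hj
      by_contra! hjk
      have hjk : j < k := hjk
      apply hj
      change homogeneousComponent j (shiftP a _) = 0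
      rw [hcomp j hjk.le, hlow (j+1) (by omega), dirDeriv_zero, smul_zero]
end

section
/- Let p ∈ ℝ[x₁,…,xₙ] be real-zero with respect to e ∈ ℝⁿ, with compact rigidly convex set S_e(p), and let a ∈ ∂S_e(p) be such that every irreducible factor pᵢ of p vanishing at a has a as a smooth point. Then, writing I_a = {i : pᵢ(a) = 0}, for all sufficiently small ε > 0 the intersection of S_e(p) with the closed ball B_ε(a) of radius ε around a satisfies B_ε(a) ∩ S_e(p) = {b ∈ ℝⁿ : ‖b − a‖² ≤ ε² and pᵢ(b) ≥ 0 for all i ∈ I_a} (where each pᵢ is normalized so that pᵢ(e) > 0). -/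
open MvPolynomial

lemma lp_eval {n : ℕ} (h : MvPolynomial (Fin n) ℝ) (a v : Fin n → ℝ) (t : ℝ) :
    (linePoly h a v).eval t = MvPolynomial.eval (a + t • v) h := by
  unfold linePoly
  induction h using MvPolynomial.induction_on with
  | C r => simp [MvPolynomial.algebraMap_eq, ← Polynomial.C_eq_algebraMap]
  | add p q hp hq => simp only [map_add, Polynomial.eval_add, hp, hq]
  | mul_X p i hp =>
    simp only [map_mul, Polynomial.eval_mul, hp, MvPolynomial.aeval_X, MvPolynomial.eval_X]
    congr 1
    simp
    ring

lemma lp_derivative {n : ℕ} (h : MvPolynomial (Fin n) ℝ) (a v : Fin n → ℝ) :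
    Polynomial.derivative (linePoly h a v)
      = ∑ j, Polynomial.C (v j) * linePoly (MvPolynomial.pderiv j h) a v := by
  unfold linePoly
  induction h using MvPolynomial.induction_on with
  | C r => simp [MvPolynomial.algebraMap_eq, ← Polynomial.C_eq_algebraMap]
  | add p q hp hq => simp only [map_add, hp, hq, mul_add, Finset.sum_add_distrib]
  | mul_X p i hp =>
    simp only [map_mul, MvPolynomial.aeval_X, Polynomial.derivative_mul, hp, Derivation.leibniz,
      smul_eq_mul, MvPolynomial.pderiv_X]
    have h1 : ∀ j, Polynomial.C (v j) * (MvPolynomial.aeval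
          (fun i => Polynomial.C (a i) + Polynomial.C (v i) * Polynomial.X))
            (p * (Pi.single j 1 : Fin n → MvPolynomial (Fin n) ℝ) i
              + MvPolynomial.X i * (MvPolynomial.pderiv j) p)
        = (if j = i then Polynomial.C (v i) * (MvPolynomial.aeval
          (fun i => Polynomial.C (a i) + Polynomial.C (v i) * Polynomial.X)) p else 0)
          + Polynomial.C (v j) * (MvPolynomial.aeval
          (fun i => Polynomial.C (a i) + Polynomial.C (v i) * Polynomial.X))
            ((MvPolynomial.pderiv j) p) * (Polynomial.C (a i) + Polynomial.C (v i) * Polynomial.X) := by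
      intro j
      rw [map_add, map_mul, map_mul, MvPolynomial.aeval_X]
      split_ifs with hj
      · subst hj
        rw [Pi.single_eq_same, map_one]; ring
      · rw [Pi.single_eq_of_ne (Ne.symm hj), map_zero]; ring
    rw [Finset.sum_congr rfl (fun j _ => h1 j), Finset.sum_add_distrib, ← Finset.sum_mul, add_comm]
    congr 1
    simp only [Polynomial.derivative_add, Polynomial.derivative_C, Polynomial.derivative_C_mul,
      Polynomial.derivative_X, Finset.sum_ite_eq', Finset.mem_univ, if_true]
    ring

lemma lp_deriv_eval {n : ℕ} (h : MvPolynomial (Fin n) ℝ) (a v : Fin n → ℝ) (t : ℝ) :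
    (Polynomial.derivative (linePoly h a v)).eval t
      = ∑ j, v j * MvPolynomial.eval (a + t • v) (MvPolynomial.pderiv j h) := by
  rw [lp_derivative, Polynomial.eval_finsetSum]
  simp [lp_eval]

lemma rr_splits {g : Polynomial ℝ} (hg : RealRooted g) : g.Splits := by
  refine Polynomial.Splits.of_splits_map (algebraMap ℝ ℂ) (IsAlgClosed.splits _) ?_
  intro z hz
  have h0 := Polynomial.isRoot_of_mem_roots hz
  rw [Polynomial.IsRoot, Polynomial.eval_map_algebraMap] at h0
  exact ⟨z.re, by apply Complex.ext <;> simp [hg z h0]⟩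

lemma laguerre_aux (s : Multiset ℝ) (x : ℝ) :
    0 ≤ ((Polynomial.derivative (s.map (fun r => Polynomial.X - Polynomial.C r)).prod).eval x) ^ 2
      - ((s.map (fun r => Polynomial.X - Polynomial.C r)).prod).eval x
        * (Polynomial.derivative (Polynomial.derivative (s.map (fun r => Polynomial.X - Polynomial.C r)).prod)).eval x := by
  induction s using Multiset.induction_on with
  | empty => simp
  | cons r s ih =>
    simp only [Multiset.map_cons, Multiset.prod_cons]
    set Q := (s.map (fun r => Polynomial.X - Polynomial.C r)).prod
    simp only [Polynomial.derivative_mul, Polynomial.derivative_sub, Polynomial.derivative_X, Polynomial.derivative_C, Polynomial.derivative_add,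
      Polynomial.eval_add, Polynomial.eval_mul, Polynomial.eval_sub, Polynomial.eval_X, Polynomial.eval_C, sub_zero, one_mul]
    nlinarith [sq_nonneg (Q.eval x), mul_nonneg (sq_nonneg (x - r)) ih]

lemma laguerre_bound {g : Polynomial ℝ} (hg : g.Splits) (M : ℝ) (hM : 1 ≤ M)
    (h1 : g.eval 1 ≠ 0)
    (hb : ((Polynomial.derivative g).eval 1) ^ 2 - g.eval 1 * (Polynomial.derivative (Polynomial.derivative g)).eval 1
      ≤ M * (g.eval 1) ^ 2) :
    |g.eval 0| ≤ (1 + M) ^ g.natDegree * |g.eval 1| := by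
  have hroot : ∀ r ∈ g.roots, |r| ≤ (1 + M) * |1 - r| := by
    intro r hr
    obtain ⟨s, hs⟩ := Multiset.exists_cons_of_mem hr
    have hgp := hg.eq_prod_roots
    rw [hs, Multiset.map_cons, Multiset.prod_cons] at hgp
    have hlag := laguerre_aux s 1
    set Q := (s.map (fun r => Polynomial.X - Polynomial.C r)).prod
    set c := g.leadingCoeff
    rw [hgp] at h1 hb
    simp only [Polynomial.derivative_mul, Polynomial.derivative_sub, Polynomial.derivative_X, Polynomial.derivative_C, Polynomial.derivative_add,
      Polynomial.eval_add, Polynomial.eval_mul, Polynomial.eval_sub, Polynomial.eval_X, Polynomial.eval_C, sub_zero, one_mul, zero_mul, zero_add] at h1 hb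
    have hc : c ≠ 0 := fun h => h1 (by simp [h])
    have hQ : Q.eval 1 ≠ 0 := fun h => h1 (by simp [h])
    have hcQ : 0 < c ^ 2 * (Q.eval 1) ^ 2 := by positivity
    have key : c ^ 2 * (Q.eval 1) ^ 2 * 1 ≤ c ^ 2 * (Q.eval 1) ^ 2 * (M * (1 - r) ^ 2) := by
      have := mul_nonneg (mul_nonneg (sq_nonneg c) (sq_nonneg (1 - r))) hlag
      nlinarith
    have k2 : 1 ≤ M * (1 - r) ^ 2 := le_of_mul_le_mul_left key hcQ
    have k3 : 1 ≤ M * |1 - r| := by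
      by_contra hcon
      push Not at hcon
      have h0 := abs_nonneg (1 - r)
      rw [← sq_abs] at k2
      nlinarith
    have : |r| ≤ 1 + |1 - r| := by
      have := abs_sub_abs_le_abs_sub r 1
      rw [abs_one, abs_sub_comm] at this
      linarith
    linarith
  have habs : ∀ x : ℝ, |g.eval x| = |g.leadingCoeff| * (g.roots.map (fun r => |x - r|)).prod := by
    intro x
    rw [hg.eval_eq_prod_roots, abs_mul]
    congr 1
    have := map_multiset_prod (absHom : ℝ →*₀ ℝ) (g.roots.map fun r => x - r)
    rw [Multiset.map_map] at this
    exact this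
  rw [habs, habs, hg.natDegree_eq_card_roots]
  have : ∀ s : Multiset ℝ, (∀ r ∈ s, |r| ≤ (1 + M) * |1 - r|) →
      (s.map (fun r => |0 - r|)).prod ≤ (1 + M) ^ s.card * (s.map (fun r => |1 - r|)).prod := by
    intro s
    induction s using Multiset.induction_on with
    | empty => simp
    | cons r s ih =>
      intro h
      have h1 := h r (by simp)
      have h2 := ih (fun r' hr' => h r' (by simp [hr']))
      simp only [Multiset.map_cons, Multiset.prod_cons, Multiset.card_cons, zero_sub, abs_neg] at *
      calc _ ≤ ((1 + M) * |1 - r|) * ((1 + M) ^ s.card * (s.map (fun r => |1 - r|)).prod) :=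
            mul_le_mul h1 h2 (Multiset.prod_nonneg (by simp +contextual)) (by positivity)
        _ = _ := by ring
  have := mul_le_mul_of_nonneg_left (this g.roots hroot) (abs_nonneg g.leadingCoeff)
  linarith

/-- The bivariate polynomial `(s, t) ↦ q(e + t (d + s w))`. -/
noncomputable def bivar {n : ℕ} (q : MvPolynomial (Fin n) ℝ) (e d w : Fin n → ℝ) :
    Polynomial (Polynomial ℝ) :=
  MvPolynomial.aeval (fun i => Polynomial.C (Polynomial.C (e i))
    + Polynomial.C (Polynomial.C (d i) + Polynomial.C (w i) * Polynomial.X) * Polynomial.X) q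

lemma bivar_map {n : ℕ} (q : MvPolynomial (Fin n) ℝ) (e d w : Fin n → ℝ) (s : ℝ) :
    (bivar q e d w).map (Polynomial.evalRingHom s) = linePoly q e (d + s • w) := by
  unfold bivar linePoly
  induction q using MvPolynomial.induction_on with
  | C r => simp [MvPolynomial.algebraMap_eq, Polynomial.algebraMap_apply]
  | add p q hp hq => rw [map_add, map_add, Polynomial.map_add, hp, hq]
  | mul_X p i hp =>
    simp only [map_mul, Polynomial.map_mul, hp, MvPolynomial.aeval_X]
    congr 1
    simp
    ring

lemma bivar_eval {n : ℕ} (q : MvPolynomial (Fin n) ℝ) (e d w : Fin n → ℝ) (s : ℝ) :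
    (linePoly q e (d + s • w)).eval 1 = ((bivar q e d w).eval 1).eval s ∧
    (Polynomial.derivative (linePoly q e (d + s • w))).eval 1 = ((Polynomial.derivative (bivar q e d w)).eval 1).eval s ∧
    (Polynomial.derivative (Polynomial.derivative (linePoly q e (d + s • w)))).eval 1
      = ((Polynomial.derivative (Polynomial.derivative (bivar q e d w))).eval 1).eval s := by
  have hh : ∀ F : Polynomial (Polynomial ℝ), (F.map (Polynomial.evalRingHom s)).eval 1 = (F.eval 1).eval s := by
    intro F
    have := Polynomial.eval_map_apply (f := Polynomial.evalRingHom s) (p := F) 1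
    simpa using this
  rw [← bivar_map]
  simp only [Polynomial.derivative_map, hh, and_self]

open Filter Topology in
lemma smooth_transversal {n : ℕ} (q : MvPolynomial (Fin n) ℝ) (e a : Fin n → ℝ)
    (hrr : ∀ v, RealRooted (linePoly q e v)) (he : MvPolynomial.eval e q ≠ 0)
    (ha : MvPolynomial.eval a q = 0)
    (hs : (fun j => MvPolynomial.eval a (MvPolynomial.pderiv j q)) ≠ 0) :
    (Polynomial.derivative (linePoly q e (a - e))).eval 1 ≠ 0 := by
  intro hd
  set γ := (Polynomial.derivative (Polynomial.derivative (linePoly q e (a - e)))).eval 1 with hγ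
  obtain ⟨w, hw0, hwγ⟩ : ∃ w : Fin n → ℝ,
      (∑ j, w j * MvPolynomial.eval a (MvPolynomial.pderiv j q)) ≠ 0 ∧
      0 ≤ (∑ j, w j * MvPolynomial.eval a (MvPolynomial.pderiv j q)) * γ := by
    obtain ⟨j, hj⟩ := Function.ne_iff.1 hs
    simp only [Pi.zero_apply] at hj
    have hsum : ∀ x : ℝ, (∑ k, (Pi.single j x : Fin n → ℝ) k *
        MvPolynomial.eval a (MvPolynomial.pderiv k q))
        = x * MvPolynomial.eval a (MvPolynomial.pderiv j q) := by
      intro x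
      rw [Finset.sum_eq_single j]
      · simp
      · intro k _ hk; simp [hk]
      · simp
    rcases le_total 0 (MvPolynomial.eval a (MvPolynomial.pderiv j q) * γ) with h | h
    · exact ⟨Pi.single j 1, by rw [hsum]; simpa using hj, by rw [hsum]; linarith⟩
    · exact ⟨Pi.single j (-1), by rw [hsum]; simpa using hj, by rw [hsum]; linarith⟩
  set c := ∑ j, w j * MvPolynomial.eval a (MvPolynomial.pderiv j q) with hc
  set F := bivar q e (a - e) w with hF
  set A0 := F.eval 1 with hA0
  set A1 := (Polynomial.derivative F).eval 1 with hA1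
  set A2 := (Polynomial.derivative (Polynomial.derivative F)).eval 1 with hA2
  have hE := fun s => bivar_eval q e (a - e) w s
  have hA0e : A0 = linePoly q a w := by
    apply Polynomial.funext
    intro s
    rw [← (hE s).1, lp_eval, lp_eval]
    congr 2
    ext i; simp; ring
  have h00 : A0.eval 0 = 0 := by rw [hA0e, lp_eval]; simpa using ha
  have h0d : (Polynomial.derivative A0).eval 0 = c := by rw [hA0e, lp_deriv_eval]; simp [hc]
  have h10 : A1.eval 0 = 0 := by rw [← (hE 0).2.1]; simpa using hd
  have h20 : A2.eval 0 = γ := by rw [← (hE 0).2.2]; simp [hγ]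
  have fac : ∀ B : Polynomial ℝ, B.eval 0 = 0 → ∃ D, B = Polynomial.X * D := by
    intro B hB
    have := (Polynomial.X_dvd_iff (f := B)).2 (by rw [Polynomial.coeff_zero_eq_eval_zero, hB])
    exact this
  obtain ⟨B0, hB0⟩ := fac A0 h00
  obtain ⟨B1, hB1⟩ := fac A1 h10
  obtain ⟨B2, hB2⟩ := fac (A2 - Polynomial.C γ) (by simp [h20])
  have hB0c : B0.eval 0 = c := by
    rw [hB0] at h0d; simpa using h0d
  have hc0 : c ≠ 0 := hw0
  obtain ⟨M, hM1, hM⟩ : ∃ M : ℝ, 1 ≤ M ∧ (B1 ^ 2 - B0 * B2).eval 0 < M * (B0 ^ 2).eval 0 := by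
    have : 0 < (B0 ^ 2).eval 0 := by simp [hB0c]; positivity
    refine ⟨max 1 ((B1 ^ 2 - B0 * B2).eval 0 / (B0 ^ 2).eval 0 + 1), le_max_left _ _, ?_⟩
    calc (B1 ^ 2 - B0 * B2).eval 0
        < ((B1 ^ 2 - B0 * B2).eval 0 / (B0 ^ 2).eval 0 + 1) * (B0 ^ 2).eval 0 := by
          rw [add_mul, div_mul_cancel₀ _ this.ne']; linarith
      _ ≤ _ := mul_le_mul_of_nonneg_right (le_max_right _ _) this.le
  have ev1 : ∀ᶠ s in 𝓝 (0:ℝ), (B1 ^ 2 - B0 * B2).eval s < M * (B0 ^ 2).eval s :=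
    (Polynomial.continuous _).continuousAt.eventually_lt
      ((Polynomial.continuous _).const_mul M).continuousAt hM
  have ev2 : ∀ᶠ s in 𝓝 (0:ℝ), 0 < c * B0.eval s := by
    refine continuousAt_const.eventually_lt
      ((Polynomial.continuous _).const_mul c).continuousAt ?_
    rw [hB0c]; exact mul_self_pos.2 hc0
  have ev3 : ∀ᶠ s in 𝓝 (0:ℝ), (1 + M) ^ F.natDegree * |A0.eval s| < |MvPolynomial.eval e q| := by
    refine ContinuousAt.eventually_lt
      ((Polynomial.continuous A0).abs.const_mul _).continuousAt continuousAt_const ?_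
    rw [h00]; simpa using he
  have ev : ∀ᶠ s in 𝓝[>] (0:ℝ), 0 < s := self_mem_nhdsWithin
  obtain ⟨s, ⟨⟨hs1, hs2⟩, hs3⟩, hs0⟩ :=
    (((((ev1.and ev2).and ev3).filter_mono nhdsWithin_le_nhds).and ev).exists)
  obtain ⟨e0, e1, e2⟩ := hE s
  have v0 : A0.eval s = s * B0.eval s := by rw [hB0]; simp
  have v1 : A1.eval s = s * B1.eval s := by rw [hB1]; simp
  have v2 : A2.eval s = γ + s * B2.eval s := by
    have := congrArg (Polynomial.eval s) hB2
    simp at this; linarith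
  have hB0s : B0.eval s ≠ 0 := fun h => by simp [h] at hs2
  have hγs : 0 ≤ B0.eval s * γ := by
    by_contra hcon
    push Not at hcon
    have : c ^ 2 * (B0.eval s * γ) < 0 := mul_neg_of_pos_of_neg (by positivity) hcon
    have := mul_nonneg hs2.le hwγ
    nlinarith
  have hbound := laguerre_bound (rr_splits (hrr (a - e + s • w))) M hM1
    (by rw [e0, ← hF, ← hA0, v0]; exact mul_ne_zero hs0.ne' hB0s)
    (by
      rw [e0, e1, e2, ← hF, ← hA0, ← hA1, ← hA2, v0, v1, v2]
      simp at hs1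
      have := mul_le_mul_of_nonneg_left hs1.le (sq_nonneg s)
      have := mul_nonneg hs0.le hγs
      nlinarith)
  have hdeg : (linePoly q e (a - e + s • w)).natDegree ≤ F.natDegree := by
    rw [← bivar_map]; exact Polynomial.natDegree_map_le
  have hpow : (1 + M) ^ (linePoly q e (a - e + s • w)).natDegree ≤ (1 + M) ^ F.natDegree :=
    pow_le_pow_right₀ (by linarith) hdeg
  rw [e0, ← hF, ← hA0, lp_eval, zero_smul, add_zero] at hbound
  have := mul_le_mul_of_nonneg_right hpow (abs_nonneg (A0.eval s))
  linarith

/-- Points near `a` at which `q` does not vanish on the segment `[e, a]`. -/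
lemma tube {n : ℕ} (q : MvPolynomial (Fin n) ℝ) (e a : Fin n → ℝ) (u : ℝ)
    (h : ∀ t ∈ Set.Icc 0 u, 0 < MvPolynomial.eval (e + t • (a - e)) q) :
    ∀ᶠ b in nhds a, ∀ t ∈ Set.Icc 0 u, 0 < MvPolynomial.eval (e + t • (b - e)) q := by
  apply isCompact_Icc.eventually_forall_of_forall_eventually
  intro t ht
  have hcont : Continuous fun z : (Fin n → ℝ) × ℝ => MvPolynomial.eval (e + z.2 • (z.1 - e)) q :=
    (MvPolynomial.continuous_eval q).comp (by fun_prop)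
  exact (isOpen_lt continuous_const hcont).mem_nhds (h t ht)

lemma seg_pos {n : ℕ} (q : MvPolynomial (Fin n) ℝ) (e b : Fin n → ℝ)
    (he : 0 < MvPolynomial.eval e q)
    (h : ∀ t : ℝ, 0 ≤ t → t < 1 → MvPolynomial.eval (e + t • (b - e)) q ≠ 0) :
    ∀ t : ℝ, 0 ≤ t → t < 1 → 0 < MvPolynomial.eval (e + t • (b - e)) q := by
  intro t ht0 ht1
  by_contra hcon
  push Not at hcon
  have hcont : Continuous fun t : ℝ => MvPolynomial.eval (e + t • (b - e)) q :=
    (MvPolynomial.continuous_eval q).comp (by fun_prop)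
  obtain ⟨x, hx, hx0⟩ := intermediate_value_Icc' ht0 hcont.continuousOn
    (show (0:ℝ) ∈ Set.Icc _ _ from ⟨hcon, by simpa using he.le⟩)
  exact h x hx.1 (lt_of_le_of_lt hx.2 ht1) hx0

lemma seg_end {n : ℕ} (q : MvPolynomial (Fin n) ℝ) (e b : Fin n → ℝ)
    (h : ∀ t : ℝ, 0 ≤ t → t < 1 → 0 < MvPolynomial.eval (e + t • (b - e)) q) :
    0 ≤ MvPolynomial.eval b q := by
  have hcont : Continuous fun t : ℝ => MvPolynomial.eval (e + t • (b - e)) q :=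
    (MvPolynomial.continuous_eval q).comp (by fun_prop)
  by_contra hcon
  push Not at hcon
  have h1 : (fun t : ℝ => MvPolynomial.eval (e + t • (b - e)) q) 1 < 0 := by simpa using hcon
  have ev := (hcont.continuousAt.eventually_lt continuousAt_const h1).filter_mono
    (nhdsWithin_le_nhds (s := Set.Iio 1))
  have ev2 : ∀ᶠ t in nhdsWithin (1:ℝ) (Set.Iio 1), t < 1 := self_mem_nhdsWithin
  have ev3 : ∀ᶠ t in nhdsWithin (1:ℝ) (Set.Iio 1), 0 < t :=
    (lt_mem_nhds one_pos).filter_mono nhdsWithin_le_nhds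
  obtain ⟨t, ⟨ht1, ht2⟩, ht3⟩ := ((ev.and ev2).and ev3).exists
  exact absurd (h t ht3.le ht2) (not_lt.2 ht1.le)

open Filter Topology in
lemma local_factor {n : ℕ} (q : MvPolynomial (Fin n) ℝ) (e a : Fin n → ℝ)
    (hrr : ∀ v, RealRooted (linePoly q e v)) (he : 0 < MvPolynomial.eval e q)
    (hpos : ∀ t : ℝ, 0 ≤ t → t < 1 → 0 < MvPolynomial.eval (e + t • (a - e)) q)
    (hs : MvPolynomial.eval a q = 0 →
      (fun j => MvPolynomial.eval a (MvPolynomial.pderiv j q)) ≠ 0) :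
    ∀ᶠ b in nhds a, (MvPolynomial.eval a q = 0 → 0 ≤ MvPolynomial.eval b q) →
      ∀ t : ℝ, 0 ≤ t → t < 1 → 0 < MvPolynomial.eval (e + t • (b - e)) q := by
  have hend := seg_end q e a hpos
  by_cases h0 : MvPolynomial.eval a q = 0
  swap
  · have := tube q e a 1 (by
      rintro t ⟨h1, h2⟩
      rcases h2.lt_or_eq with h | rfl
      · exact hpos t h1 h
      · simpa using lt_of_le_of_ne hend (Ne.symm h0))
    filter_upwards [this] with b hb _ t ht0 ht1
    exact hb t ⟨ht0, ht1.le⟩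
  have htr := smooth_transversal q e a hrr he.ne' h0 (hs h0)
  have hneg : (Polynomial.derivative (linePoly q e (a - e))).eval 1 < 0 := by
    refine lt_of_le_of_ne ?_ htr
    by_contra hcon
    push Not at hcon
    have hda := (linePoly q e (a - e)).hasDerivAt 1
    have hsl := hasDerivAt_iff_tendsto_slope.1 hda
    have ev := (hsl.eventually_const_lt hcon).filter_mono
      (nhdsWithin_mono (1:ℝ) (s := Set.Iio 1) (fun x hx => ne_of_lt hx))
    have ev2 : ∀ᶠ t in nhdsWithin (1:ℝ) (Set.Iio 1), t < 1 := self_mem_nhdsWithin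
    have ev3 : ∀ᶠ t in nhdsWithin (1:ℝ) (Set.Iio 1), 0 < t :=
      (lt_mem_nhds one_pos).filter_mono nhdsWithin_le_nhds
    obtain ⟨t, ⟨ht1, ht2⟩, ht3⟩ := ((ev.and ev2).and ev3).exists
    have hp := hpos t ht3.le ht2
    rw [slope_def_field, lp_eval, lp_eval, one_smul, add_sub_cancel, h0] at ht1
    have := div_neg_of_pos_of_neg (a := MvPolynomial.eval (e + t • (a - e)) q - 0) (b := t - 1)
      (by linarith) (by linarith)
    linarith
  have hcont : Continuous fun z : (Fin n → ℝ) × ℝ =>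
      (Polynomial.derivative (linePoly q e (z.1 - e))).eval z.2 := by
    simp only [lp_deriv_eval]
    refine continuous_finsetSum _ fun j _ => Continuous.mul (by fun_prop) ?_
    exact (MvPolynomial.continuous_eval _).comp (by fun_prop)
  have hev : ∀ᶠ z in 𝓝 (a, (1:ℝ)),
      (Polynomial.derivative (linePoly q e (z.1 - e))).eval z.2 < 0 :=
    (isOpen_lt hcont continuous_const).mem_nhds hneg
  rw [nhds_prod_eq] at hev
  obtain ⟨pa, hpa, pt, hpt, hP⟩ := Filter.eventually_prod_iff.1 hev
  obtain ⟨δ, hδ, hball⟩ := Metric.eventually_nhds_iff.1 hpt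
  have htube := tube q e a (1 - δ / 2) (by
    rintro t ⟨h1, h2⟩
    exact hpos t h1 (by linarith))
  filter_upwards [hpa, htube] with b hb1 hb2 hb t ht0 ht1
  by_cases htd : t ≤ 1 - δ / 2
  · exact hb2 t ⟨ht0, htd⟩
  push Not at htd
  have hanti : StrictAntiOn (fun t => (linePoly q e (b - e)).eval t) (Set.Icc (1 - δ / 2) 1) := by
    apply strictAntiOn_of_deriv_neg (convex_Icc _ _) (Polynomial.continuous _).continuousOn
    intro x hx
    rw [interior_Icc] at hx
    rw [Polynomial.deriv]
    refine hP hb1 (hball ?_)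
    rw [Real.dist_eq, abs_lt]
    constructor <;> linarith [hx.1, hx.2]
  have := hanti (a := t) ⟨htd.le, ht1.le⟩ (b := 1) ⟨by linarith, le_rfl⟩ ht1
  simp only [lp_eval, one_smul, add_sub_cancel] at this
  exact lt_of_le_of_lt (hb h0) this

/-- Let `p` be real-zero with respect to `e` with compact rigidly convex
set, let `p = p₁ ⋯ pₘ` be a factorization into irreducible factors (normalized so that
`pᵢ(e) > 0`), and let `a` be a boundary point of `S_e(p)` such that every irreducible
factor vanishing at `a` has `a` as a smooth point. Then for all sufficiently small `ε > 0`
one has `B_ε(a) ∩ S_e(p) = {b : ‖b − a‖² ≤ ε² and pᵢ(b) ≥ 0 for all i with pᵢ(a) = 0}`. -/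
theorem local_description_of_rigidSet
    {n m : ℕ} (p : MvPolynomial (Fin n) ℝ) (e : Fin n → ℝ) (hrz : IsRealZero p e)
    (hcomp : IsCompact (rigidSet p e))
    (q : Fin m → MvPolynomial (Fin n) ℝ) (hirr : ∀ i, Irreducible (q i))
    (hfac : p = ∏ i, q i) (hnorm : ∀ i, 0 < MvPolynomial.eval e (q i))
    (a : Fin n → ℝ) (ha : a ∈ frontier (rigidSet p e))
    (hsm : ∀ i, MvPolynomial.eval a (q i) = 0 →
      (fun j => MvPolynomial.eval a (MvPolynomial.pderiv j (q i))) ≠ 0) :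
    ∃ ε₀ > (0 : ℝ), ∀ ε : ℝ, 0 < ε → ε ≤ ε₀ →
      {b : Fin n → ℝ | ∑ i, (b i - a i) ^ 2 ≤ ε ^ 2} ∩ rigidSet p e
        = {b : Fin n → ℝ | (∑ i, (b i - a i) ^ 2 ≤ ε ^ 2) ∧
            ∀ i, MvPolynomial.eval a (q i) = 0 → 0 ≤ MvPolynomial.eval b (q i)} := by
  have hS : ∀ b, b ∈ rigidSet p e ↔ ∀ i, ∀ t : ℝ, 0 ≤ t → t < 1 →
      MvPolynomial.eval (e + t • (b - e)) (q i) ≠ 0 := by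
    intro b
    simp only [rigidSet, Set.mem_ofPred_eq, Polynomial.IsRoot, lp_eval, hfac, map_prod,
      Finset.prod_eq_zero_iff, Finset.mem_univ, true_and, not_exists]
    exact ⟨fun h i t h0 h1 => h t h0 h1 i, fun h t h0 h1 i => h i t h0 h1⟩
  have haS : a ∈ rigidSet p e := hcomp.isClosed.frontier_subset ha
  have hrr : ∀ i v, RealRooted (linePoly (q i) e v) := by
    intro i v z hz
    apply hrz.2 v z
    have : linePoly p e v = ∏ i, linePoly (q i) e v := by
      unfold linePoly; rw [hfac, map_prod]
    rw [this, map_prod]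
    exact Finset.prod_eq_zero (Finset.mem_univ i) hz
  have hloc : ∀ᶠ b in nhds a, ∀ i, (MvPolynomial.eval a (q i) = 0 → 0 ≤ MvPolynomial.eval b (q i)) →
      ∀ t : ℝ, 0 ≤ t → t < 1 → 0 < MvPolynomial.eval (e + t • (b - e)) (q i) := by
    rw [Filter.eventually_all]
    intro i
    exact local_factor (q i) e a (hrr i) (hnorm i)
      (seg_pos (q i) e a (hnorm i) ((hS a).1 haS i)) (hsm i)
  obtain ⟨δ, hδ, hball⟩ := Metric.eventually_nhds_iff.1 hloc
  refine ⟨δ / 2, by linarith, fun ε hε hεδ => ?_⟩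
  ext b
  simp only [Set.mem_inter_iff, Set.mem_ofPred_eq]
  refine and_congr_right fun hb => ?_
  constructor
  · intro hbS i _
    exact seg_end (q i) e b (seg_pos (q i) e b (hnorm i) ((hS b).1 hbS i))
  · intro h
    rw [hS]
    intro i t h0 h1
    refine (hball ?_ i (h i) t h0 h1).ne'
    rw [dist_pi_lt_iff hδ]
    intro j
    have h2 : (b j - a j) ^ 2 ≤ ε ^ 2 :=
      (Finset.single_le_sum (f := fun i => (b i - a i) ^ 2) (fun i _ => sq_nonneg _)
        (Finset.mem_univ j)).trans hb
    have h3 := abs_le.1 (abs_le_of_sq_le_sq h2 hε.le)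
    rw [Real.dist_eq, abs_lt]
    constructor <;> linarith [h3.1, h3.2]
end
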